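/- Let R be a local ring with Jacobson radical J(R), and let r : I → R and s : J → R be families of nonzero elements of J(R). Suppose there exist bijections σ, τ : I → J such that: (1) for every i ∈ I, the cyclically presented right R-modules R/r_i R and R/s_{σ(i)} R have the same lower part, i.e., there exist units u, v of R and elements x, y ∈ R with r_i u = x s_{σ(i)} and s_{σ(i)} v = y r_i; and (2) for every i ∈ I, R/r_i R and R/s_{τ(i)} R belong to the same epigeny class. Then the right R-modules ∏_{i∈I} R/r_i R and ∏_{j∈J} R/s_j R are isomorphic. -/

import Mathlib

/-- Two modules belong to the same epigeny class if there are surjective homomorphisms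
in both directions. -/
def SameEpigenyClass (S : Type*) [Ring S] (M N : Type*) [AddCommGroup M] [Module S M]
    [AddCommGroup N] [Module S N] : Prop :=
  (∃ f : M →ₗ[S] N, Function.Surjective f) ∧ ∃ g : N →ₗ[S] M, Function.Surjective g

/-- The cyclically presented right `R`-module `R/rR`: the quotient of `R`, viewed as a right
module over itself (i.e. a module over `Rᵐᵒᵖ`), by the right ideal `rR` generated by `r`. -/
abbrev CyclicallyPresented (R : Type*) [Ring R] (r : R) : Type _ :=
  R ⧸ (Submodule.span Rᵐᵒᵖ {r} : Submodule Rᵐᵒᵖ R)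

/-- Two cyclically presented modules `R/rR` and `R/sR` over a local ring `R` have the same
lower part if there are units `u, v` and elements `x, y` with `ru = xs` and `sv = yr`. -/
def SameLowerPart (R : Type*) [Ring R] (r s : R) : Prop :=
  ∃ (u v : Rˣ) (x y : R), r * u = x * s ∧ s * v = y * r

theorem IsLocalRing.isDedekindFiniteMonoid (R : Type*) [Ring R] [IsLocalRing R] :
    IsDedekindFiniteMonoid R where
  mul_eq_one_symm {a b} h := by
    have hidem : b * a * (b * a) = b * a := by
      rw [mul_assoc, ← mul_assoc a b a, h, one_mul]
    rcases IsLocalRing.isUnit_or_isUnit_of_add_one (add_sub_cancel (b * a) 1) with hu | hu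
    · exact hu.mul_left_cancel (by rw [hidem, mul_one])
    · have h0 : b * a = 0 := by
        refine hu.mul_left_cancel ?_
        rw [sub_mul, one_mul, hidem, sub_self, mul_zero]
      have ha : a = 0 := by
        rw [← one_mul a, ← h, mul_assoc, h0, mul_zero]
      rw [ha, zero_mul] at h
      exact absurd h zero_ne_one

attribute [local instance] IsLocalRing.isDedekindFiniteMonoid

theorem IsLocalRing.isUnit_add_of_isUnit_of_not_isUnit {R : Type*} [Ring R] [IsLocalRing R]
    {a b : R} (ha : IsUnit a) (hb : ¬IsUnit b) : IsUnit (a + b) := by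
  have h : IsUnit (a + b + -b) := by rwa [add_neg_cancel_right]
  exact (IsLocalRing.isUnit_or_isUnit_of_isUnit_add h).resolve_right (by rwa [IsUnit.neg_iff])

namespace SameLowerPart

variable {R : Type*} [Ring R] {a b c : R}

theorem refl (a : R) : SameLowerPart R a a := ⟨1, 1, 1, 1, by simp, by simp⟩

theorem symm (h : SameLowerPart R a b) : SameLowerPart R b a := by
  obtain ⟨u, v, x, y, h₁, h₂⟩ := h
  exact ⟨v, u, y, x, h₂, h₁⟩

theorem trans (hab : SameLowerPart R a b) (hbc : SameLowerPart R b c) :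
    SameLowerPart R a c := by
  obtain ⟨u, v, x, y, h₁, h₂⟩ := hab
  obtain ⟨u', v', x', y', h₃, h₄⟩ := hbc
  refine ⟨u * u', v' * v, x * x', y' * y, ?_, ?_⟩
  · rw [Units.val_mul, ← mul_assoc, h₁, mul_assoc, h₃, mul_assoc]
  · rw [Units.val_mul, ← mul_assoc, h₄, mul_assoc, h₂, mul_assoc]

theorem of_mul_eq_mul {y v : R} (hy : IsUnit y) (hv : IsUnit v) (h : y * a = b * v) :
    SameLowerPart R a b := by
  obtain ⟨y, rfl⟩ := hy
  obtain ⟨v, rfl⟩ := hv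
  refine ⟨v⁻¹, v, ↑y⁻¹, y, ?_, h.symm⟩
  rw [Units.eq_inv_mul_iff_mul_eq, ← mul_assoc, h, Units.mul_inv_cancel_right]

end SameLowerPart

/-- Over a local ring this expresses, for nonunits `a` and `b`, that `R/aR` and `R/bR` have the
same epigeny class. -/
def SameUpperPart (R : Type*) [Ring R] (a b : R) : Prop :=
  ∃ (p p' : Rˣ) (q q' : R), p * a = b * q ∧ p' * b = a * q'

namespace SameUpperPart

variable {R : Type*} [Ring R] {a b c : R}

theorem refl (a : R) : SameUpperPart R a a := ⟨1, 1, 1, 1, by simp, by simp⟩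

theorem symm (h : SameUpperPart R a b) : SameUpperPart R b a := by
  obtain ⟨p, p', q, q', h₁, h₂⟩ := h
  exact ⟨p', p, q', q, h₂, h₁⟩

theorem trans (hab : SameUpperPart R a b) (hbc : SameUpperPart R b c) :
    SameUpperPart R a c := by
  obtain ⟨u, v, x, y, h₁, h₂⟩ := hab
  obtain ⟨u', v', x', y', h₃, h₄⟩ := hbc
  refine ⟨u' * u, v * v', x' * x, y * y', ?_, ?_⟩
  · rw [Units.val_mul, mul_assoc, h₁, ← mul_assoc, h₃, mul_assoc]
  · rw [Units.val_mul, mul_assoc, h₄, ← mul_assoc, h₂, mul_assoc]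

theorem of_mul_eq_mul {y v : R} (hy : IsUnit y) (hv : IsUnit v) (h : y * a = b * v) :
    SameUpperPart R a b := by
  obtain ⟨y, rfl⟩ := hy
  obtain ⟨v, rfl⟩ := hv
  refine ⟨y, y⁻¹, v, ↑v⁻¹, h, ?_⟩
  rw [Units.inv_mul_eq_iff_eq_mul, ← mul_assoc, h, Units.mul_inv_cancel_right]

end SameUpperPart

section CyclicallyPresented

variable {R : Type*} [Ring R]

theorem mem_span_mulOpposite_singleton {a x : R} :
    x ∈ (Submodule.span Rᵐᵒᵖ {a} : Submodule Rᵐᵒᵖ R) ↔ ∃ t, x = a * t := by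
  rw [Submodule.mem_span_singleton]
  exact ⟨fun ⟨t, ht⟩ => ⟨t.unop, ht.symm⟩, fun ⟨t, ht⟩ => ⟨MulOpposite.op t, ht.symm⟩⟩

theorem CyclicallyPresented.exists_mul_eq_mul_of_surjective [IsLocalRing R] {a b : R}
    (hb : ¬IsUnit b)
    {f : CyclicallyPresented R a →ₗ[Rᵐᵒᵖ] CyclicallyPresented R b} (hf : Function.Surjective f) :
    ∃ (p : Rˣ) (q : R), p * a = b * q := by
  obtain ⟨p, hp⟩ := Submodule.Quotient.mk_surjective _ (f (Submodule.Quotient.mk 1))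
  have hfx (x : R) : f (Submodule.Quotient.mk x) = Submodule.Quotient.mk (p * x) := by
    have h : (Submodule.Quotient.mk x : CyclicallyPresented R a) =
        MulOpposite.op x • Submodule.Quotient.mk 1 := by
      rw [← Submodule.Quotient.mk_smul, op_smul_eq_mul, one_mul]
    rw [h, map_smul, ← hp, ← Submodule.Quotient.mk_smul, op_smul_eq_mul]
  have hpu : IsUnit p := by
    obtain ⟨m, hm⟩ := hf (Submodule.Quotient.mk 1)
    obtain ⟨t, rfl⟩ := Submodule.Quotient.mk_surjective _ m
    rw [hfx, eq_comm, Submodule.Quotient.eq, mem_span_mulOpposite_singleton] at hm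
    obtain ⟨w, hw⟩ := hm
    rcases IsLocalRing.isUnit_or_isUnit_of_add_one
      (show p * t + b * w = 1 by rw [← hw, add_sub_cancel]) with h | h
    · exact isUnit_of_mul_isUnit_left h
    · exact absurd (isUnit_of_mul_isUnit_left h) hb
  have ha := hfx a
  rw [(Submodule.Quotient.mk_eq_zero _).2 (Submodule.mem_span_singleton_self a), map_zero, eq_comm,
    Submodule.Quotient.mk_eq_zero, mem_span_mulOpposite_singleton] at ha
  obtain ⟨q, hq⟩ := ha
  exact ⟨hpu.unit, q, hq⟩

theorem SameEpigenyClass.sameUpperPart [IsLocalRing R] {a b : R} (ha : ¬IsUnit a)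
    (hb : ¬IsUnit b)
    (h : SameEpigenyClass Rᵐᵒᵖ (CyclicallyPresented R a) (CyclicallyPresented R b)) :
    SameUpperPart R a b := by
  obtain ⟨⟨f, hf⟩, g, hg⟩ := h
  obtain ⟨p, q, hpq⟩ := CyclicallyPresented.exists_mul_eq_mul_of_surjective hb hf
  obtain ⟨p', q', hpq'⟩ := CyclicallyPresented.exists_mul_eq_mul_of_surjective ha hg
  exact ⟨p, p', q, q', hpq, hpq'⟩

end CyclicallyPresented

section FourthCorner

variable {R : Type*} [Ring R] [IsLocalRing R] {a b c : R}

/-- Elements with the same lower and upper part are equivalent by units. -/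
theorem SameLowerPart.exists_isUnit_mul_eq_mul (hl : SameLowerPart R a b)
    (hu : SameUpperPart R a b) :
    ∃ y v : R, IsUnit y ∧ IsUnit v ∧ y * a = b * v := by
  obtain ⟨-, v, -, y, -, h₁⟩ := hl
  obtain ⟨p, -, q, -, h₂, -⟩ := hu
  by_cases hy : IsUnit y
  · exact ⟨y, v, hy, v.isUnit, h₁.symm⟩
  by_cases hq : IsUnit q
  · exact ⟨p, q, p.isUnit, hq, h₂⟩
  refine ⟨p + y, v + q, IsLocalRing.isUnit_add_of_isUnit_of_not_isUnit p.isUnit hy,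
    IsLocalRing.isUnit_add_of_isUnit_of_not_isUnit v.isUnit hq, ?_⟩
  rw [add_mul, mul_add, h₁, h₂, add_comm]

theorem exists_sameLowerPart_sameUpperPart (hl : SameLowerPart R a b)
    (hu : SameUpperPart R a c) : ∃ d, SameLowerPart R d c ∧ SameUpperPart R d b := by
  obtain ⟨u, v, x, y, h₁, h₂⟩ := id hl
  obtain ⟨p, p', q, q', h₃, h₄⟩ := id hu
  by_cases hy : IsUnit y
  · exact ⟨c, .refl c, hu.symm.trans (.of_mul_eq_mul hy v.isUnit h₂.symm)⟩
  by_cases hq : IsUnit q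
  · exact ⟨b, hl.symm.trans (.of_mul_eq_mul p.isUnit hq h₃), .refl b⟩
  have hpc : ↑p⁻¹ * c * q = a := by
    rw [mul_assoc, ← h₃, Units.inv_mul_cancel_left]
  obtain ⟨E, hE⟩ : IsUnit (p' * p + x * y : R) :=
    IsLocalRing.isUnit_add_of_isUnit_of_not_isUnit (p' * p).isUnit
      fun h => hy (isUnit_of_mul_isUnit_right h)
  obtain ⟨W, hW⟩ : IsUnit (u * v + q' * q : R) :=
    IsLocalRing.isUnit_add_of_isUnit_of_not_isUnit (u * v).isUnit
      fun h => hq (isUnit_of_mul_isUnit_right h)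
  have hEa : E * a = a * W := by
    rw [hE, hW, add_mul, mul_add, mul_assoc _ _ a, mul_assoc _ _ a, h₃, ← h₂, ← mul_assoc,
      ← mul_assoc, ← mul_assoc, ← mul_assoc, h₁, h₄, add_comm]
  have hEa' : ↑E⁻¹ * a = a * ↑W⁻¹ := by
    rw [Units.inv_mul_eq_iff_eq_mul, ← mul_assoc, hEa, Units.mul_inv_cancel_right]
  have hxy : x * y = E - p' * p := by rw [hE, add_sub_cancel_left]
  obtain ⟨w, hw⟩ : IsUnit (1 - q * ↑W⁻¹ * q' : R) := by
    rw [sub_eq_add_neg]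
    refine IsLocalRing.isUnit_add_of_isUnit_of_not_isUnit isUnit_one fun h => hq ?_
    rw [IsUnit.neg_iff] at h
    exact isUnit_of_mul_isUnit_left (isUnit_of_mul_isUnit_left h)
  obtain ⟨P, hP⟩ : IsUnit (1 - y * ↑E⁻¹ * x : R) := by
    rw [sub_eq_add_neg]
    refine IsLocalRing.isUnit_add_of_isUnit_of_not_isUnit isUnit_one fun h => hy ?_
    rw [IsUnit.neg_iff] at h
    exact isUnit_of_mul_isUnit_left (isUnit_of_mul_isUnit_left h)
  refine ⟨y * ↑p⁻¹ * c, ⟨1, w, y * ↑p⁻¹, p * ↑E⁻¹ * x, by simp, ?_⟩,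
    ⟨P, 1, v * ↑W⁻¹ * q', q * ↑v⁻¹, ?_, ?_⟩⟩
  · calc c * w = c - c * q * ↑W⁻¹ * q' := by rw [hw]; noncomm_ring
      _ = c - p * (a * ↑W⁻¹) * q' := by rw [← h₃]; noncomm_ring
      _ = c - p * ↑E⁻¹ * (a * q') := by rw [← hEa']; noncomm_ring
      _ = c - p * ↑E⁻¹ * p' * c := by rw [← h₄]; noncomm_ring
      _ = p * (↑E⁻¹ * E) * ↑p⁻¹ * c - p * ↑E⁻¹ * p' * (p * ↑p⁻¹) * c := by simp
      _ = p * ↑E⁻¹ * (E - p' * p) * ↑p⁻¹ * c := by noncomm_ring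
      _ = p * ↑E⁻¹ * x * (y * ↑p⁻¹ * c) := by rw [← hxy]; noncomm_ring
  · calc P * (y * ↑p⁻¹ * c) = y * ↑p⁻¹ * c - y * ↑E⁻¹ * (x * y) * ↑p⁻¹ * c := by
          rw [hP]; noncomm_ring
      _ = y * ↑p⁻¹ * c - y * (↑E⁻¹ * E) * ↑p⁻¹ * c + y * ↑E⁻¹ * p' * (p * ↑p⁻¹) * c := by
          rw [hxy]; noncomm_ring
      _ = y * ↑E⁻¹ * (p' * c) := by simp [mul_assoc]
      _ = y * (↑E⁻¹ * a) * q' := by rw [h₄]; noncomm_ring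
      _ = y * a * (↑W⁻¹ * q') := by rw [hEa']; noncomm_ring
      _ = b * (v * ↑W⁻¹ * q') := by rw [← h₂]; noncomm_ring
  · calc ((1 : Rˣ) : R) * b = y * a * ↑v⁻¹ := by rw [← h₂]; simp
      _ = y * (↑p⁻¹ * c * q) * ↑v⁻¹ := by rw [hpc]
      _ = y * ↑p⁻¹ * c * (q * ↑v⁻¹) := by noncomm_ring

end FourthCorner

section Involution

variable {R I : Type*} [Ring R]

theorem IsLocalRing.existsUnique_pair_of_isUnit [IsLocalRing R] {f₁ f₂ g₁ g₂ : R}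
    (hf₁ : IsUnit f₁) (hf₂ : IsUnit f₂) (hg₁ : ¬IsUnit g₁) (y z : R) :
    ∃! t : R × R, f₁ * t.1 + g₁ * t.2 = y ∧ g₂ * t.1 + f₂ * t.2 = z := by
  obtain ⟨f₂, rfl⟩ := hf₂
  obtain ⟨u, hu⟩ : IsUnit (f₁ + -(g₁ * (↑f₂⁻¹ * g₂))) :=
    isUnit_add_of_isUnit_of_not_isUnit hf₁ fun h => hg₁ <| by
      rw [IsUnit.neg_iff] at h
      exact isUnit_of_mul_isUnit_left h
  have key (p q : R) : (f₁ * p + g₁ * q = y ∧ g₂ * p + f₂ * q = z) ↔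
      p = ↑u⁻¹ * (y - g₁ * (↑f₂⁻¹ * z)) ∧ q = ↑f₂⁻¹ * (z - g₂ * p) := by
    rw [Units.eq_inv_mul_iff_mul_eq, Units.eq_inv_mul_iff_mul_eq, hu, eq_sub_iff_add_eq',
      eq_sub_iff_add_eq', and_congr_left_iff]
    intro hz
    have hq : q = ↑f₂⁻¹ * z - ↑f₂⁻¹ * (g₂ * p) := by
      rw [← mul_sub, Units.eq_inv_mul_iff_mul_eq, ← hz, add_sub_cancel_left]
    rw [hq]
    refine Eq.congr ?_ rfl
    noncomm_ring
  refine ⟨(_, ↑f₂⁻¹ * (z - g₂ * (↑u⁻¹ * (y - g₁ * (↑f₂⁻¹ * z))))), (key _ _).2 ⟨rfl, rfl⟩,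
    fun t ht => ?_⟩
  obtain ⟨h₁, h₂⟩ := (key _ _).1 ht
  exact Prod.ext h₁ (by rw [h₂, h₁])

/-- The right `R`-linear endomorphism of `I → R` with coefficient `f i` at `(i, i)` and
`g i` at `(i, β i)`. -/
def involutionMap (β : I → I) (f g : I → R) : (I → R) →ₗ[Rᵐᵒᵖ] (I → R) where
  toFun x i := f i * x i + g i * x (β i)
  map_add' x y := by
    ext i
    simp only [Pi.add_apply]
    noncomm_ring
  map_smul' t x := by
    ext i
    simp [mul_assoc]

theorem involutionMap_apply (β : I → I) (f g : I → R) (x : I → R) (i : I) :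
    involutionMap β f g x i = f i * x i + g i * x (β i) := rfl

theorem involutionMap_bijective [IsLocalRing R] {β : I → I} (hβ : Function.Involutive β)
    {f g : I → R} (hfg : ∀ i, IsUnit (g i) ↔ ¬IsUnit (f i))
    (hfβ : ∀ i, IsUnit (f (β i)) ↔ IsUnit (f i)) :
    Function.Bijective (involutionMap β f g) := by
  have key (i : I) (y z : R) : ∃! t : R × R,
      f i * t.1 + g i * t.2 = y ∧ g (β i) * t.1 + f (β i) * t.2 = z := by
    by_cases hf : IsUnit (f i)
    · exact IsLocalRing.existsUnique_pair_of_isUnit hf ((hfβ i).2 hf)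
        (fun h => (hfg i).1 h hf) y z
    · obtain ⟨t, ⟨h₁, h₂⟩, ht⟩ := IsLocalRing.existsUnique_pair_of_isUnit (g₂ := f (β i))
        ((hfg i).2 hf) ((hfg (β i)).2 (by rwa [hfβ])) hf y z
      refine ⟨t.swap, ⟨?_, ?_⟩, fun t' ht' => ?_⟩
      · rw [← h₁]
        exact add_comm _ _
      · rw [← h₂]
        exact add_comm _ _
      · rw [← ht t'.swap ⟨by rw [← ht'.1]; exact add_comm _ _,
          by rw [← ht'.2]; exact add_comm _ _⟩, Prod.swap_swap]
  constructor
  · intro x x' hxx'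
    ext i
    have hi := congrFun hxx' i
    have hβi := congrFun hxx' (β i)
    simp only [involutionMap_apply, hβ i] at hi hβi
    exact congrArg Prod.fst ((key i _ _).unique (y₁ := (x i, x (β i))) (y₂ := (x' i, x' (β i)))
      ⟨hi, by rw [add_comm, hβi]⟩ ⟨rfl, add_comm _ _⟩)
  · intro y
    choose t ht using fun i => (key i (y i) (y (β i))).exists
    have hswap (i : I) : (t (β i)).1 = (t i).2 := by
      have h := ht (β i)
      rw [hβ i] at h
      exact congrArg Prod.snd ((key i _ _).unique (y₁ := (t (β i)).swap)
        ⟨by rw [← h.2]; exact add_comm _ _, by rw [← h.1]; exact add_comm _ _⟩ (ht i))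
    refine ⟨fun i => (t i).1, funext fun i => ?_⟩
    rw [involutionMap_apply, hswap, (ht i).1]

/-- The projection of `I → R` onto the product of the modules `R/(a i)R`. -/
def CyclicallyPresented.piMkQ (a : I → R) :
    (I → R) →ₗ[Rᵐᵒᵖ] ((i : I) → CyclicallyPresented R (a i)) :=
  LinearMap.pi fun i => (Submodule.mkQ _).comp (LinearMap.proj i)

theorem CyclicallyPresented.piMkQ_surjective (a : I → R) : Function.Surjective (piMkQ a) := by
  intro y
  choose x hx using fun i => Submodule.Quotient.mk_surjective _ (y i)
  exact ⟨x, funext hx⟩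

theorem CyclicallyPresented.mem_ker_piMkQ {a : I → R} {x : I → R} :
    x ∈ (piMkQ a).ker ↔ ∃ t : I → R, ∀ i, x i = a i * t i := by
  rw [LinearMap.mem_ker, funext_iff, ← Classical.skolem (p := fun i t => x i = a i * t)]
  refine forall_congr' fun i => ?_
  rw [← mem_span_mulOpposite_singleton]
  exact Submodule.Quotient.mk_eq_zero _

theorem CyclicallyPresented.nonempty_pi_equiv_of_involutionMap {a b f f' g g' : I → R}
    {β : I → I} (hf : ∀ i, f i * a i = b i * f' i) (hg : ∀ i, g i * a (β i) = b i * g' i)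
    (h : Function.Bijective (involutionMap β f g))
    (h' : Function.Surjective (involutionMap β f' g')) :
    Nonempty (((i : I) → CyclicallyPresented R (a i)) ≃ₗ[Rᵐᵒᵖ]
      ((i : I) → CyclicallyPresented R (b i))) := by
  have hT (t : I → R) (i : I) :
      involutionMap β f g (fun i => a i * t i) i = b i * involutionMap β f' g' t i := by
    simp only [involutionMap_apply, mul_add, ← mul_assoc, hf, hg]
  refine ⟨((piMkQ a).quotKerEquivOfSurjective (piMkQ_surjective a)).symm.trans
    ((Submodule.Quotient.equiv _ _ (LinearEquiv.ofBijective _ h) ?_).trans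
      ((piMkQ b).quotKerEquivOfSurjective (piMkQ_surjective b)))⟩
  ext z
  rw [Submodule.mem_map, mem_ker_piMkQ]
  constructor
  · rintro ⟨x, hx, rfl⟩
    obtain ⟨t, ht⟩ := mem_ker_piMkQ.1 hx
    obtain rfl : x = fun i => a i * t i := funext ht
    exact ⟨_, hT t⟩
  · rintro ⟨t, ht⟩
    obtain ⟨t, rfl⟩ := h' t
    exact ⟨fun i => a i * t i, mem_ker_piMkQ.2 ⟨t, fun _ => rfl⟩,
      funext fun i => (hT t i).trans (ht i).symm⟩

theorem CyclicallyPresented.nonempty_pi_equiv_of_involutive [IsLocalRing R] {a b : I → R}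
    {β : I → I} (hβ : Function.Involutive β) (hl : ∀ i, SameLowerPart R (a i) (b i))
    (hu : ∀ i, SameUpperPart R (a (β i)) (b i)) :
    Nonempty (((i : I) → CyclicallyPresented R (a i)) ≃ₗ[Rᵐᵒᵖ]
      ((i : I) → CyclicallyPresented R (b i))) := by
  have hP (i : I) : SameUpperPart R (a (β i)) (a (β (β i))) ↔ SameUpperPart R (a i) (a (β i)) := by
    rw [hβ i]
    exact ⟨.symm, .symm⟩
  have hQ (i : I) : SameLowerPart R (a (β i)) (a (β (β i))) ↔ SameLowerPart R (a i) (a (β i)) := by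
    rw [hβ i]
    exact ⟨.symm, .symm⟩
  have key (i : I) : ∃ f f' g g' : R, f * a i = b i * f' ∧ g * a (β i) = b i * g' ∧
      (IsUnit f ↔ SameUpperPart R (a i) (a (β i))) ∧ (IsUnit g ↔ ¬IsUnit f) ∧
      (IsUnit f' ↔ (SameLowerPart R (a i) (a (β i)) → SameUpperPart R (a i) (a (β i)))) ∧
      (IsUnit g' ↔ ¬IsUnit f') := by
    by_cases hPi : SameUpperPart R (a i) (a (β i))
    · obtain ⟨f, f', hf, hf', h⟩ := (hl i).exists_isUnit_mul_eq_mul (hPi.trans (hu i))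
      exact ⟨f, f', 0, 0, h, by simp, by simp [*], by simp [*], by simp [*], by simp [*]⟩
    by_cases hQi : SameLowerPart R (a i) (a (β i))
    · obtain ⟨g, g', hg, hg', h⟩ := (hQi.symm.trans (hl i)).exists_isUnit_mul_eq_mul (hu i)
      exact ⟨0, 0, g, g', by simp, h, by simp [*], by simp [*], by simp [*], by simp [*]⟩
    obtain ⟨-, f', -, f, -, h₁⟩ := hl i
    obtain ⟨g, -, g', -, h₂, -⟩ := hu i
    have hf : ¬IsUnit f := fun hf =>
      hPi ((SameUpperPart.of_mul_eq_mul hf f'.isUnit h₁.symm).trans (hu i).symm)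
    have hg' : ¬IsUnit g' := fun hg' =>
      hQi ((hl i).trans (SameLowerPart.of_mul_eq_mul g.isUnit hg' h₂).symm)
    exact ⟨f, f', g, g', h₁.symm, h₂, by simp [*], by simp [*], by simp [*], by simp [*]⟩
  choose f f' g g' hf hg hfP hgf hfP' hgf' using key
  exact nonempty_pi_equiv_of_involutionMap hf hg
    (involutionMap_bijective hβ hgf fun i => by rw [hfP, hfP, hP])
    (involutionMap_bijective hβ hgf' fun i => by rw [hfP', hfP', hP, hQ]).2

end Involution

/-- Every permutation is a product of two involutions, one of which preserves its cycles. -/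
theorem Equiv.Perm.exists_involutive_comp_involutive {I : Type*} (π : Equiv.Perm I) :
    ∃ α β : I → I, Function.Involutive α ∧ Function.Involutive β ∧ (∀ i, α (β i) = π i) ∧
      ∀ i, π.SameCycle i (α i) := by
  let c (i : I) : I := (Quotient.mk (SameCycle.setoid π) i).out
  have hc (i : I) : π.SameCycle (c i) i := Quotient.mk_out (s := SameCycle.setoid π) i
  have hcc {i j : I} (h : π.SameCycle i j) : c i = c j :=
    congrArg Quotient.out (Quotient.sound (s := SameCycle.setoid π) h)
  choose n hn using hc
  let α (i : I) : I := (π ^ (-n i)) (c i)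
  have hα (i : I) (m : ℤ) : α ((π ^ m) (c i)) = (π ^ (-m)) (c i) := by
    have h₁ : c ((π ^ m) (c i)) = c i := hcc ⟨n i - m, by
      rw [← mul_apply, ← zpow_add, sub_add_cancel, hn]⟩
    have h₂ := hn ((π ^ m) (c i))
    change (π ^ (-n ((π ^ m) (c i)))) (c ((π ^ m) (c i))) = _
    rw [h₁] at h₂ ⊢
    generalize n ((π ^ m) (c i)) = k at h₂
    rw [zpow_neg, inv_eq_iff_eq, ← mul_apply, ← zpow_add, add_comm, zpow_add, mul_apply, h₂,
      zpow_neg]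
    exact ((π ^ m).symm_apply_apply _).symm
  have hα' (i : I) : α i = (π ^ (-n i)) (c i) := rfl
  have hαα : Function.Involutive α := fun i => by
    rw [hα' i, hα, neg_neg, hn]
  refine ⟨α, fun i => α (π i), hαα, fun i => ?_, fun i => hαα _, fun i => ?_⟩
  · have h₁ : π i = (π ^ (1 + n i)) (c i) := by rw [zpow_one_add, mul_apply, hn]
    have h₂ : π ((π ^ (-(1 + n i))) (c i)) = (π ^ (-n i)) (c i) := by
      rw [← mul_apply, ← zpow_one_add, neg_add, add_neg_cancel_left]
    change α (π (α (π i))) = i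
    rw [h₁, hα, h₂, hα, neg_neg, hn]
  · refine ⟨-n i + -n i, ?_⟩
    rw [zpow_add, mul_apply, hα']
    congr 1
    rw [zpow_neg, inv_eq_iff_eq, hn]

/-- The relation, for a family `r`, that some element has the lower part of `r i` and the upper
part of `r j`. -/
def Linked {R I : Type*} [Ring R] (r : I → R) (i j : I) : Prop :=
  ∃ d, SameLowerPart R d (r i) ∧ SameUpperPart R d (r j)

theorem Linked.equivalence {R I : Type*} [Ring R] [IsLocalRing R] (r : I → R) :
    Equivalence (Linked r) where
  refl i := ⟨r i, .refl _, .refl _⟩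
  symm {i j} := fun ⟨_, hl, hu⟩ => by
    obtain ⟨d, hdl, hdu⟩ := exists_sameLowerPart_sameUpperPart hl hu
    exact ⟨d, hdl, hdu⟩
  trans {i j k} := fun ⟨_, hl, hu⟩ ⟨_, hl', hu'⟩ => by
    obtain ⟨d, hdl, hdu⟩ := exists_sameLowerPart_sameUpperPart hl'.symm hu.symm
    exact ⟨d, hdl.trans hl, hdu.trans hu'⟩

theorem Linked.of_sameCycle {R I : Type*} [Ring R] [IsLocalRing R] {r : I → R}
    {π : Equiv.Perm I} (h : ∀ i, Linked r i (π i)) {i j : I} (hij : π.SameCycle i j) :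
    Linked r i j := by
  have he := Linked.equivalence r
  obtain ⟨n, rfl⟩ := hij
  induction n with
  | zero => exact he.refl i
  | succ n ih =>
    rw [add_comm, zpow_one_add, Equiv.Perm.mul_apply]
    exact he.trans ih (h _)
  | pred n ih =>
    refine he.trans ih (he.symm ?_)
    have hstep := h ((π ^ (-(n : ℤ) - 1)) i)
    rwa [← Equiv.Perm.mul_apply, ← zpow_one_add, add_sub_cancel] at hstep

/-- Direct products of cyclically presented modules over a local ring whose lower parts and
epigeny classes are matched by bijections are isomorphic (as right `R`-modules). -/
theorem direct_products_of_cyclically_presented_isomorphic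
    {R : Type*} [Ring R] [IsLocalRing R] {I J : Type*}
    (r : I → R) (s : J → R)
    (hr0 : ∀ i, r i ≠ 0) (hrJ : ∀ i, ¬IsUnit (r i))
    (hs0 : ∀ j, s j ≠ 0) (hsJ : ∀ j, ¬IsUnit (s j))
    (σ τ : I ≃ J)
    (hl : ∀ i, SameLowerPart R (r i) (s (σ i)))
    (he : ∀ i, SameEpigenyClass Rᵐᵒᵖ
      (CyclicallyPresented R (r i)) (CyclicallyPresented R (s (τ i)))) :
    Nonempty (((i : I) → CyclicallyPresented R (r i)) ≃ₗ[Rᵐᵒᵖ]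
      ((j : J) → CyclicallyPresented R (s j))) := by
  have hu (i : I) := (he i).sameUpperPart (hrJ i) (hsJ (τ i))
  have hσ (i : I) : SameUpperPart R (s (σ i)) (r ((σ.trans τ.symm) i)) := by
    simpa using (hu (τ.symm (σ i))).symm
  obtain ⟨α, β, hα, hβ, hαβ, hcycle⟩ := Equiv.Perm.exists_involutive_comp_involutive (σ.trans τ.symm)
  choose d hdl hdu using fun i =>
    Linked.of_sameCycle (fun i => ⟨s (σ i), (hl i).symm, hσ i⟩) (hcycle i)
  obtain ⟨e₁⟩ := CyclicallyPresented.nonempty_pi_equiv_of_involutive hα (fun i => (hdl i).symm)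
    (fun i => (hdu i).symm)
  obtain ⟨e₂⟩ := CyclicallyPresented.nonempty_pi_equiv_of_involutive (b := fun i => s (σ i)) hβ
    (fun i => (hdl i).trans (hl i))
    (fun i => (hdu (β i)).trans (by rw [hαβ]; exact (hσ i).symm))
  exact ⟨e₁.trans (e₂.trans
    (LinearEquiv.piCongrLeft Rᵐᵒᵖ (fun j => CyclicallyPresented R (s j)) σ))⟩
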